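/- arXiv:2408.06934 — 2 statements merged into one kernel-verified Lean document; each statement's English description precedes it below -/
import Mathlib

section
/- Let H be a complex Hilbert space, let A : H → H be a bounded linear operator with ‖A‖ < 1, let N ≥ 1 be an integer, let {g_j}_{j∈ℕ} be a Bessel sequence in H, let w : ℤ → H be an N-periodic sequence, let x : ℕ → H satisfy x(n+1) = A x(n) + w(n) for all n ≥ 0, and let x_p be the unique N-periodic solution. Then the sample matrix D = [⟨x(n), g_j⟩]_{n≥0, j∈ℕ} belongs to M_N; that is, every row r_n = (⟨x(n), g_j⟩)_{j∈ℕ} lies in ℓ²(ℕ), sup_{n≥0} ‖r_n‖_{ℓ²} < ∞, and for each s = 0, …, N−1 the rows r_{Nk+s} converge in ℓ²(ℕ), as k → ∞, to the sequence (⟨x_p(s), g_j⟩)_{j∈ℕ}. -/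
open Complex Filter Topology
open scoped InnerProductSpace ENNReal

noncomputable section

/-- `g` is a Bessel sequence in `H`. -/
def IsBessel {H : Type*} [NormedAddCommGroup H] [InnerProductSpace ℂ H] (g : ℕ → H) : Prop :=
  ∃ C : ℝ, 0 ≤ C ∧ ∀ v : H, Summable (fun j => ‖⟪v, g j⟫_ℂ‖ ^ 2) ∧
    ∑' j, ‖⟪v, g j⟫_ℂ‖ ^ 2 ≤ C * ‖v‖ ^ 2

theorem stmt11 {H : Type*} [NormedAddCommGroup H] [InnerProductSpace ℂ H] [CompleteSpace H]
    (A : H →L[ℂ] H) (hA : ‖A‖ < 1) (N : ℕ) (hN : 1 ≤ N)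
    (g : ℕ → H) (hg : IsBessel g)
    (w : ℤ → H) (hw : ∀ n : ℤ, w (n + N) = w n)
    (x : ℕ → H) (hx : ∀ n : ℕ, x (n + 1) = A (x n) + w (n : ℤ))
    (xp : ℤ → H) (hxp_per : ∀ n : ℤ, xp (n + N) = xp n)
    (hxp_rec : ∀ n : ℤ, xp (n + 1) = A (xp n) + w n) :
    -- every row `r_n = (⟪x(n), g_j⟫)_j` lies in `ℓ²(ℕ)`,
    (∀ n : ℕ, Memℓp (fun j => ⟪x n, g j⟫_ℂ) 2) ∧
    -- the rows are uniformly bounded in `ℓ²` norm,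
    (∃ C : ℝ, ∀ n : ℕ, ∑' j, ‖⟪x n, g j⟫_ℂ‖ ^ 2 ≤ C) ∧
    -- and for each `0 ≤ s ≤ N−1` the rows `r_{Nk+s}` converge in `ℓ²(ℕ)`, as `k → ∞`,
    -- to the (square-summable) sequence `(⟪x_p(s), g_j⟫)_j`:
    (∀ s : ℕ, s < N →
      Memℓp (fun j => ⟪xp (s : ℤ), g j⟫_ℂ) 2 ∧
      Tendsto (fun k : ℕ => ∑' j, ‖⟪x (N * k + s), g j⟫_ℂ - ⟪xp (s : ℤ), g j⟫_ℂ‖ ^ 2)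
        atTop (𝓝 0)) := by
  obtain ⟨C, hC0, hC⟩ := hg
  have hmem : ∀ v : H, Memℓp (fun j => ⟪v, g j⟫_ℂ) 2 := by
    intro v
    refine memℓp_gen ?_
    simpa using (hC v).1
  have hdiff : ∀ n : ℕ, ‖x n - xp (n : ℤ)‖ ≤ ‖A‖ ^ n * ‖x 0 - xp 0‖ := by
    intro n
    induction n with
    | zero => simp
    | succ n ih =>
      have h1 : x (n + 1) - xp ((n + 1 : ℕ) : ℤ) = A (x n - xp (n : ℤ)) := by
        push_cast
        rw [hx, hxp_rec, map_sub]
        abel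
      rw [h1]
      calc ‖A (x n - xp (n : ℤ))‖ ≤ ‖A‖ * ‖x n - xp (n : ℤ)‖ := A.le_opNorm _
        _ ≤ ‖A‖ * (‖A‖ ^ n * ‖x 0 - xp 0‖) := by gcongr
        _ = ‖A‖ ^ (n + 1) * ‖x 0 - xp 0‖ := by ring
  have hper : ∀ k s : ℕ, xp ((N * k + s : ℕ) : ℤ) = xp (s : ℤ) := by
    intro k s
    induction k with
    | zero => simp
    | succ k ih =>
      rw [← ih, ← hxp_per ((N * k + s : ℕ) : ℤ)]
      congr 1
      push_cast
      ring
  refine ⟨fun n => hmem _, ?_, ?_⟩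
  · refine ⟨C * (‖x 0 - xp 0‖ + ∑ i ∈ Finset.range N, ‖xp (i : ℤ)‖) ^ 2, fun n => ?_⟩
    refine (hC (x n)).2.trans ?_
    have h1 : ‖xp (n : ℤ)‖ ≤ ∑ i ∈ Finset.range N, ‖xp (i : ℤ)‖ := by
      have h2 := hper (n / N) (n % N)
      rw [Nat.div_add_mod] at h2
      rw [h2]
      exact Finset.single_le_sum (f := fun i : ℕ => ‖xp (i : ℤ)‖) (fun i _ => norm_nonneg _)
        (Finset.mem_range.2 (Nat.mod_lt _ hN))
    have h3 : ‖x n - xp (n : ℤ)‖ ≤ ‖x 0 - xp 0‖ :=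
      (hdiff n).trans (mul_le_of_le_one_left (norm_nonneg _)
        (pow_le_one₀ (norm_nonneg _) hA.le))
    have h4 : ‖x n‖ ≤ ‖x n - xp (n : ℤ)‖ + ‖xp (n : ℤ)‖ := by
      simpa using norm_add_le (x n - xp (n : ℤ)) (xp (n : ℤ))
    have h5 : ‖x n‖ ≤ ‖x 0 - xp 0‖ + ∑ i ∈ Finset.range N, ‖xp (i : ℤ)‖ := by linarith
    gcongr
  · intro s _
    refine ⟨hmem _, ?_⟩
    have hidx : Tendsto (fun k : ℕ => N * k + s) atTop atTop :=
      tendsto_atTop_mono (fun k => (Nat.le_mul_of_pos_left k hN).trans (Nat.le_add_right _ _)) tendsto_id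
    have hpow : Tendsto (fun k : ℕ => ‖A‖ ^ (N * k + s)) atTop (𝓝 0) :=
      (tendsto_pow_atTop_nhds_zero_of_lt_one (norm_nonneg _) hA).comp hidx
    have hlim : Tendsto (fun k : ℕ => C * (‖A‖ ^ (N * k + s) * ‖x 0 - xp 0‖) ^ 2)
        atTop (𝓝 0) := by
      simpa using ((hpow.mul_const ‖x 0 - xp 0‖).pow 2).const_mul C
    refine squeeze_zero (fun k => tsum_nonneg fun j => by positivity) (fun k => ?_) hlim
    simp only [← inner_sub_left]
    refine (hC _).2.trans ?_
    have h1 := hdiff (N * k + s)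
    rw [hper] at h1
    gcongr
end
end

section
/- Let H be a complex separable Hilbert space, let N ≥ 1 be an integer, and for each s = 0, …, N−1 let {g^s_j}_{j∈ℕ} be a Bessel sequence in H with Bessel bound C_s. Then for every D = [d_{i,j}] ∈ M_N and each s = 0, …, N−1, the limit [Q(D)]_s := lim_{i→∞} ∑_{j∈ℕ} d_{Ni+s, j} · g^s_j exists in H (each series converging in H), and satisfies ‖[Q(D)]_s‖ ≤ √(C_s) · ‖D‖. In particular Q : M_N → H^N, Q(D) = ([Q(D)]_0, …, [Q(D)]_{N−1}), is a well-defined bounded linear operator with ‖Q(D)‖_{H^N} ≤ C ‖D‖ for a constant C depending only on C_0, …, C_{N−1} and N. -/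
open Complex Filter Topology
open scoped InnerProductSpace ENNReal

noncomputable section

/-- `ℓ²(ℕ)` over `ℂ`. -/
abbrev ellTwo : Type := lp (fun _ : ℕ => ℂ) 2

/-- The Banach space `B(ℓ², ℓ^∞)` of matrices all of whose rows lie in `ℓ²(ℕ)`,
with finite sup norm (i.e. bounded sequences of rows in `ℓ²(ℕ)` with the sup norm). -/
abbrev BSpace : Type := lp (fun _ : ℕ => ellTwo) ∞

/-- The subspace `M_N` of `B(ℓ², ℓ^∞)`: matrices whose rows `r_{Nk+s}` converge
in `ℓ²` as `k → ∞`, for each `0 ≤ s ≤ N−1`. -/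
def MN (N : ℕ) : Submodule ℂ BSpace where
  carrier := {D | ∀ s : ℕ, s < N →
    ∃ t : ellTwo, Tendsto (fun k : ℕ => (D : ∀ _ : ℕ, ellTwo) (N * k + s)) atTop (𝓝 t)}
  add_mem' := by
    intro a b ha hb s hs
    obtain ⟨ta, hta⟩ := ha s hs
    obtain ⟨tb, htb⟩ := hb s hs
    refine ⟨ta + tb, ?_⟩
    have := hta.add htb
    simpa [lp.coeFn_add] using this
  zero_mem' := by
    intro s hs
    exact ⟨0, by simp [lp.coeFn_zero]⟩
  smul_mem' := by
    intro c a ha s hs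
    obtain ⟨ta, hta⟩ := ha s hs
    refine ⟨c • ta, ?_⟩
    have := hta.const_smul c
    simpa [lp.coeFn_smul] using this

theorem bessel_finset {H : Type*} [NormedAddCommGroup H] [InnerProductSpace ℂ H]
    (g : ℕ → H) (C : ℝ) (hC : 0 ≤ C)
    (hg : ∀ v : H, Summable (fun j => ‖⟪v, g j⟫_ℂ‖ ^ 2) ∧
      ∑' j, ‖⟪v, g j⟫_ℂ‖ ^ 2 ≤ C * ‖v‖ ^ 2) (a : ℕ → ℂ) (F : Finset ℕ) :
    ‖∑ j ∈ F, a j • g j‖ ^ 2 ≤ C * ∑ j ∈ F, ‖a j‖ ^ 2 := by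
  set v := ∑ j ∈ F, a j • g j with hv
  have h1 : ‖v‖ ^ 2 ≤ ∑ j ∈ F, ‖a j‖ * ‖⟪v, g j⟫_ℂ‖ := by
    have h : ⟪v, v⟫_ℂ = ∑ j ∈ F, a j * ⟪v, g j⟫_ℂ := by
      conv_lhs => rw [hv, inner_sum]
      simp only [inner_smul_right, ← hv]
    have h2 : ‖⟪v, v⟫_ℂ‖ = ‖v‖ ^ 2 := by
      rw [inner_self_eq_norm_sq_to_K]; simp
    rw [← h2, h]
    refine (norm_sum_le _ _).trans (le_of_eq ?_)
    simp
  have h2 := Finset.sum_mul_sq_le_sq_mul_sq F (fun j => ‖a j‖) (fun j => ‖⟪v, g j⟫_ℂ‖)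
  have h3 : ∑ j ∈ F, ‖⟪v, g j⟫_ℂ‖ ^ 2 ≤ C * ‖v‖ ^ 2 :=
    ((hg v).1.sum_le_tsum F (fun _ _ => by positivity)).trans (hg v).2
  have h4 : 0 ≤ ∑ j ∈ F, ‖a j‖ ^ 2 := Finset.sum_nonneg (fun _ _ => by positivity)
  have h5 : (‖v‖ ^ 2) ^ 2 ≤ (∑ j ∈ F, ‖a j‖ * ‖⟪v, g j⟫_ℂ‖) ^ 2 :=
    pow_le_pow_left₀ (by positivity) h1 2
  have h6 := mul_le_mul_of_nonneg_left h3 h4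
  rcases (sq_nonneg ‖v‖).eq_or_lt with h | h
  · rw [← h]; positivity
  · refine le_of_mul_le_mul_right ?_ h
    nlinarith

theorem ellTwo_hasSum (a : ellTwo) : HasSum (fun j => ‖a j‖ ^ 2) (‖a‖ ^ 2) := by
  have := lp.hasSum_norm (p := 2) (by simp) a
  simpa using this

theorem bessel_summable {H : Type*} [NormedAddCommGroup H] [InnerProductSpace ℂ H]
    [CompleteSpace H] (g : ℕ → H) (C : ℝ) (hC : 0 ≤ C)
    (hg : ∀ v : H, Summable (fun j => ‖⟪v, g j⟫_ℂ‖ ^ 2) ∧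
      ∑' j, ‖⟪v, g j⟫_ℂ‖ ^ 2 ≤ C * ‖v‖ ^ 2) (a : ellTwo) :
    Summable (fun j => a j • g j) := by
  rw [summable_iff_vanishing_norm]
  intro ε hε
  obtain ⟨s, hs⟩ := summable_iff_vanishing_norm.1 (ellTwo_hasSum a).summable
    (ε ^ 2 / (C + 1)) (by positivity)
  refine ⟨s, fun t ht => ?_⟩
  have h1 := hs t ht
  have h4 : 0 ≤ ∑ j ∈ t, ‖a j‖ ^ 2 := Finset.sum_nonneg (fun _ _ => by positivity)
  rw [Real.norm_of_nonneg h4, lt_div_iff₀ (by positivity)] at h1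
  have h2 := bessel_finset g C hC hg a t
  refine lt_of_pow_lt_pow_left₀ 2 hε.le ?_
  nlinarith

theorem bessel_norm {H : Type*} [NormedAddCommGroup H] [InnerProductSpace ℂ H]
    [CompleteSpace H] (g : ℕ → H) (C : ℝ) (hC : 0 ≤ C)
    (hg : ∀ v : H, Summable (fun j => ‖⟪v, g j⟫_ℂ‖ ^ 2) ∧
      ∑' j, ‖⟪v, g j⟫_ℂ‖ ^ 2 ≤ C * ‖v‖ ^ 2) (a : ellTwo) :
    ‖∑' j, a j • g j‖ ≤ Real.sqrt C * ‖a‖ := by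
  have h := (bessel_summable g C hC hg a).hasSum.norm
  refine le_of_tendsto h (Eventually.of_forall fun F => ?_)
  have h2 := bessel_finset g C hC hg a F
  have h3 : ∑ j ∈ F, ‖a j‖ ^ 2 ≤ ‖a‖ ^ 2 :=
    sum_le_hasSum F (fun _ _ => by positivity) (ellTwo_hasSum a)
  refine (sq_le_sq₀ (norm_nonneg _) (by positivity)).1 ?_
  rw [mul_pow, Real.sq_sqrt hC]
  exact h2.trans (mul_le_mul_of_nonneg_left h3 hC)

theorem bessel_clm {H : Type*} [NormedAddCommGroup H] [InnerProductSpace ℂ H]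
    [CompleteSpace H] (g : ℕ → H) (C : ℝ) (hC : 0 ≤ C)
    (hg : ∀ v : H, Summable (fun j => ‖⟪v, g j⟫_ℂ‖ ^ 2) ∧
      ∑' j, ‖⟪v, g j⟫_ℂ‖ ^ 2 ≤ C * ‖v‖ ^ 2) :
    ∃ T : ellTwo →L[ℂ] H, (∀ a : ellTwo, T a = ∑' j, a j • g j) ∧
      ∀ a, ‖T a‖ ≤ Real.sqrt C * ‖a‖ := by
  refine ⟨LinearMap.mkContinuous
    { toFun := fun a : ellTwo => ∑' j, a j • g j
      map_add' := fun a b => ?_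
      map_smul' := fun c a => ?_ } (Real.sqrt C) (bessel_norm g C hC hg), fun a => rfl,
      bessel_norm g C hC hg⟩
  · rw [← (bessel_summable g C hC hg a).tsum_add (bessel_summable g C hC hg b)]
    simp [add_smul]
  · simp only [RingHom.id_apply]
    rw [← (bessel_summable g C hC hg a).tsum_const_smul c]
    simp [mul_smul]

theorem stmt13 {H : Type*} [NormedAddCommGroup H] [InnerProductSpace ℂ H] [CompleteSpace H]
    [TopologicalSpace.SeparableSpace H]
    (N : ℕ) (hN : 1 ≤ N)
    (g : Fin N → ℕ → H) (C : Fin N → ℝ)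
    -- for each `s`, `{g^s_j}_j` is a Bessel sequence with Bessel bound `C s`:
    (hg : ∀ s : Fin N, 0 ≤ C s ∧ ∀ v : H,
      Summable (fun j => ‖⟪v, g s j⟫_ℂ‖ ^ 2) ∧ ∑' j, ‖⟪v, g s j⟫_ℂ‖ ^ 2 ≤ C s * ‖v‖ ^ 2) :
    -- each series converges and the limit over blocks exists, with the stated bound:
    (∀ D : MN N, ∀ s : Fin N,
      (∀ i : ℕ, Summable (fun j : ℕ =>
        (((D : BSpace) : ∀ _ : ℕ, ellTwo) (N * i + (s : ℕ)) j) • g s j)) ∧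
      ∃ L : H,
        Tendsto (fun i : ℕ =>
            ∑' j : ℕ, (((D : BSpace) : ∀ _ : ℕ, ellTwo) (N * i + (s : ℕ)) j) • g s j)
          atTop (𝓝 L) ∧
        ‖L‖ ≤ Real.sqrt (C s) * ‖(D : BSpace)‖) ∧
    -- in particular, `Q : M_N → H^N` is a well-defined bounded linear operator:
    ∃ Q : MN N →L[ℂ] PiLp 2 (fun _ : Fin N => H),
      (∀ D : MN N, ∀ s : Fin N,
        Tendsto (fun i : ℕ =>
            ∑' j : ℕ, (((D : BSpace) : ∀ _ : ℕ, ellTwo) (N * i + (s : ℕ)) j) • g s j)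
          atTop (𝓝 (Q D s))) ∧
      ∃ C' : ℝ, 0 ≤ C' ∧ ∀ D : MN N, ‖Q D‖ ≤ C' * ‖(D : BSpace)‖ := by
  choose T hT hTn using fun s => bessel_clm (g s) (C s) (hg s).1 (hg s).2
  have key : ∀ D : MN N, ∀ s : Fin N, ∃ L : H,
        Tendsto (fun i : ℕ =>
            ∑' j : ℕ, (((D : BSpace) : ∀ _ : ℕ, ellTwo) (N * i + (s : ℕ)) j) • g s j)
          atTop (𝓝 L) ∧
        ‖L‖ ≤ Real.sqrt (C s) * ‖(D : BSpace)‖ := by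
    intro D s
    obtain ⟨t, ht⟩ := D.2 s s.2
    have h := ((T s).continuous.tendsto t).comp ht
    have h' : Tendsto (fun i : ℕ =>
            ∑' j : ℕ, (((D : BSpace) : ∀ _ : ℕ, ellTwo) (N * i + (s : ℕ)) j) • g s j)
          atTop (𝓝 (T s t)) := by
      refine h.congr fun i => ?_
      exact hT s _
    refine ⟨T s t, h', ?_⟩
    refine (hTn s t).trans (mul_le_mul_of_nonneg_left ?_ (Real.sqrt_nonneg _))
    exact le_of_tendsto ht.norm (Eventually.of_forall fun i =>
      lp.norm_apply_le_norm (by simp) (D : BSpace) _)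
  refine ⟨fun D s => ⟨fun i => bessel_summable (g s) (C s) (hg s).1 (hg s).2 _, key D s⟩, ?_⟩
  choose L hL hLn using key
  have hadd : ∀ D E s, L (D + E) s = L D s + L E s := by
    intro D E s
    refine tendsto_nhds_unique (hL (D + E) s) (((hL D s).add (hL E s)).congr fun i => ?_)
    rw [← hT, ← hT, ← hT, ← map_add]
    rfl
  have hsmul : ∀ (c : ℂ) D s, L (c • D) s = c • L D s := by
    intro c D s
    refine tendsto_nhds_unique (hL (c • D) s) (((hL D s).const_smul c).congr fun i => ?_)
    rw [← hT, ← hT, ← map_smul]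
    rfl
  have hb : ∀ D : MN N, ‖(WithLp.toLp 2 (L D) : PiLp 2 (fun _ : Fin N => H))‖
      ≤ Real.sqrt (∑ s, C s) * ‖(D : BSpace)‖ := by
    intro D
    have hS : 0 ≤ ∑ s, C s := Finset.sum_nonneg fun s _ => (hg s).1
    refine (sq_le_sq₀ (norm_nonneg _) (by positivity)).1 ?_
    rw [PiLp.norm_sq_eq_of_L2, mul_pow, Real.sq_sqrt hS, Finset.sum_mul]
    refine Finset.sum_le_sum fun s _ => ?_
    have := pow_le_pow_left₀ (norm_nonneg _) (hLn D s) 2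
    rwa [mul_pow, Real.sq_sqrt (hg s).1] at this
  refine ⟨LinearMap.mkContinuous
    { toFun := fun D => WithLp.toLp 2 (L D)
      map_add' := fun D E => ?_
      map_smul' := fun c D => ?_ } (Real.sqrt (∑ s, C s)) hb, fun D s => hL D s,
      Real.sqrt (∑ s, C s), Real.sqrt_nonneg _, hb⟩
  · ext s; exact hadd D E s
  · ext s; exact hsmul c D s
end
end
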